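/- arXiv:2502.00727 — 5 statements merged into one kernel-verified Lean document; each statement's English description precedes it below -/
import Mathlib

section
/- Let T = (T_1, …, T_n) be a Szegő tuple on a complex Hilbert space H and let D_{T*} = (𝕊_n^{-1}(T, T*))^{1/2} be the positive square root of 𝕊_n^{-1}(T, T*). Then for every h ∈ H the family (‖D_{T*} T^{*k} h‖²)_{k ∈ ℤ_+^n} is summable and Σ_{k ∈ ℤ_+^n} ‖D_{T*} T^{*k} h‖² = ‖h‖², where T^{*k} = T_1^{*k_1} ⋯ T_n^{*k_n}. (Equivalently, the canonical dilation map Π_T of Müller–Vasilescu, (Π_T h)(k) = D_{T*} T^{*k} h, is an isometry.) -/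
/-!
Write `S i = adjoint (T i)` and `f m = ‖S^m h‖²` for a multi-index `m`. Because `D² = 𝕊ₙ⁻¹(T, T*)`
and the `S i` commute, `‖D S^k h‖² = ∑_ε (-1)^{|ε|} f (k + ε)`, the sum running over `ε ∈ {0,1}ⁿ`.
Summing over the box `{0, …, N-1}ⁿ` telescopes in every coordinate to `∑_ε (-1)^{|ε|} f (N ε)`
(`sum_box_eq`): this is the image of the polynomial identity
`∏ᵢ (1 + Xᵢ + ⋯ + Xᵢ^{N-1}) (1 - Xᵢ) = ∏ᵢ (1 - Xᵢ^N)` under the linear functional `X^m ↦ f m`.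
As `N → ∞`, the `C_{·0}` hypothesis and contractivity kill every term with `ε ≠ 0`, so the box sums
tend to `f 0 = ‖h‖²`. The summands are nonnegative and the boxes exhaust `ℕⁿ`, so this limit is the
sum of the family (`hasSum_of_tendsto_box`).
-/

open ContinuousLinearMap Filter Topology

variable {H : Type*} [NormedAddCommGroup H] [InnerProductSpace ℂ H] [CompleteSpace H]

/-- `T^k = T 0 ^ k 0 * T 1 ^ k 1 * ⋯` in increasing index order. -/
noncomputable def finPow {n : ℕ} (T : Fin n → H →L[ℂ] H) (k : Fin n → ℕ) : H →L[ℂ] H :=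
  ((List.finRange n).map fun i => T i ^ k i).prod

/-- `𝕊ₙ⁻¹(T, T*) = ∑_{k ∈ {0,1}ⁿ} (−1)^{|k|} T^k T^{*k}`. -/
noncomputable def szegoInv {n : ℕ} (T : Fin n → H →L[ℂ] H) : H →L[ℂ] H :=
  ∑ k : Fin n → Bool,
    ((-1 : ℂ) ^ (∑ i, if k i then 1 else 0)) •
      (finPow T (fun i => if k i then 1 else 0) *
        adjoint (finPow T (fun i => if k i then 1 else 0)))

/-- A Szegő tuple: commuting contractions, `𝕊ₙ⁻¹(T,T*) ≥ 0`, each `Tᵢ` of class `C_{·0}`. -/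
structure IsSzegoTuple {n : ℕ} (T : Fin n → H →L[ℂ] H) : Prop where
  comm : ∀ i j, T i * T j = T j * T i
  contraction : ∀ i, ‖T i‖ ≤ 1
  pos : (szegoInv T).IsPositive
  pure : ∀ i (h : H), Tendsto (fun m : ℕ => (adjoint (T i) ^ m) h) atTop (𝓝 0)

/-- A Beurling tuple: a Szegő tuple with `(I − Tᵢ*Tᵢ)(I − Tⱼ*Tⱼ) = 0` for `i ≠ j`. -/
def IsBeurlingTuple {n : ℕ} (T : Fin n → H →L[ℂ] H) : Prop :=
  IsSzegoTuple T ∧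
    ∀ i j, i ≠ j → (1 - adjoint (T i) * T i) * (1 - adjoint (T j) * T j) = 0

/-- Apply `∏_{k ∈ L} (I − Δ_{T k})` to `A`, where `Δ_X(A) = X A X*`. -/
noncomputable def applyDelta {n : ℕ} (T : Fin n → H →L[ℂ] H) (L : List (Fin n))
    (A : H →L[ℂ] H) : H →L[ℂ] H :=
  L.foldr (fun k B => B - T k * B * adjoint (T k)) A

/-- The truncated defect operator `D²_{j,T,P} = (∏_{k ∈ P} (I − Δ_{T k}))(I − Tⱼ*Tⱼ)`. -/
noncomputable def truncDefectSq {n : ℕ} (T : Fin n → H →L[ℂ] H) (j : Fin n)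
    (P : Finset (Fin n)) : H →L[ℂ] H :=
  applyDelta T (P.sort (· ≤ ·)) (1 - adjoint (T j) * T j)

/-- `D²_{j,T} = D²_{j,T,P}` for `P = {1,…,n} \ {j}`. -/
noncomputable def jointDefectSq {n : ℕ} (T : Fin n → H →L[ℂ] H) (j : Fin n) : H →L[ℂ] H :=
  truncDefectSq T j (Finset.univ.erase j)

/-- The `(i,j)`-th joint commutator `δᵢⱼ(T) = (∏_{k ∉ {i,j}} (I − Δ_{T k}))([Tⱼ, Tᵢ*])`. -/
noncomputable def jointComm {n : ℕ} (T : Fin n → H →L[ℂ] H) (i j : Fin n) : H →L[ℂ] H :=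
  applyDelta T (((Finset.univ.erase i).erase j).sort (· ≤ ·))
    (T j * adjoint (T i) - adjoint (T i) * T j)

/-- Extend a multi-index supported on `P` by zero: gives `T_P^α` via `finPow`. -/
def extendSupport {n : ℕ} (P : Finset (Fin n)) (α : ↥P → ℕ) : Fin n → ℕ :=
  fun i => if h : i ∈ P then α ⟨i, h⟩ else 0

/-- The linear functional on polynomials sending each monomial `X^k` to `f k`. -/
lemma exists_monomial_functional {n : ℕ} (f : (Fin n → ℕ) → ℝ) :
    ∃ L : MvPolynomial (Fin n) ℝ →ₗ[ℝ] ℝ,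
      ∀ k : Fin n → ℕ, L (∏ i, MvPolynomial.X i ^ k i) = f k := by
  refine ⟨(MvPolynomial.basisMonomials (Fin n) ℝ).constr ℝ (fun m => f m), fun k => ?_⟩
  have h1 : (∏ i, MvPolynomial.X i ^ k i : MvPolynomial (Fin n) ℝ)
      = MvPolynomial.basisMonomials (Fin n) ℝ (Finsupp.equivFunOnFinite.symm k) := by
    rw [MvPolynomial.coe_basisMonomials]
    dsimp only
    rw [MvPolynomial.monomial_eq, Finsupp.prod_fintype _ _ (by simp)]
    simp
  rw [h1, Module.Basis.constr_basis]
  rfl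

lemma prod_one_sub_eq {n : ℕ} {A : Type*} [CommRing A] [Algebra ℝ A] (y : Fin n → A) :
    ∏ i, (1 - y i) = ∑ ε : Fin n → Bool,
      ((-1 : ℝ) ^ (∑ i, if ε i then 1 else 0)) • ∏ i, y i ^ (if ε i then 1 else 0) := by
  have h1 : ∀ i, 1 - y i = ∑ b : Bool, (-1) ^ (if b then 1 else 0) * y i ^ (if b then 1 else 0) := by
    intro i; simp; ring
  simp_rw [h1, Finset.prod_univ_sum, Finset.prod_mul_distrib, Fintype.piFinset_univ]
  refine Finset.sum_congr rfl fun ε _ => ?_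
  rw [Finset.prod_pow_eq_pow_sum, Algebra.smul_def, map_pow, map_neg, map_one]

/-- Telescoping of the iterated differences of `f` over the box `{0, …, N-1}ⁿ`. -/
lemma sum_box_eq {n : ℕ} (f : (Fin n → ℕ) → ℝ) (N : ℕ) :
    ∑ k ∈ Fintype.piFinset (fun _ : Fin n => Finset.range N), ∑ ε : Fin n → Bool,
      (-1 : ℝ) ^ (∑ i, if ε i then 1 else 0) * f (fun i => (if ε i then 1 else 0) + k i)
    = ∑ ε : Fin n → Bool,
      (-1 : ℝ) ^ (∑ i, if ε i then 1 else 0) * f (fun i => N * (if ε i then 1 else 0)) := by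
  obtain ⟨L, hL⟩ := exists_monomial_functional f
  have key : (∑ k ∈ Fintype.piFinset (fun _ : Fin n => Finset.range N),
      ∏ i, (MvPolynomial.X i : MvPolynomial (Fin n) ℝ) ^ k i) * ∏ i, (1 - MvPolynomial.X i)
      = ∏ i, (1 - MvPolynomial.X i ^ N) := by
    rw [← Finset.prod_univ_sum (fun _ => Finset.range N)
      (fun i j => (MvPolynomial.X i : MvPolynomial (Fin n) ℝ) ^ j), ← Finset.prod_mul_distrib]
    exact Finset.prod_congr rfl fun i _ => geom_sum_mul_neg _ _
  have key2 := congrArg L key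
  rw [prod_one_sub_eq, prod_one_sub_eq, Finset.sum_mul, map_sum, map_sum] at key2
  simp_rw [Finset.mul_sum, map_sum, mul_smul_comm, map_smul, smul_eq_mul, ← pow_mul,
    ← Finset.prod_mul_distrib, ← pow_add, hL] at key2
  simp_rw [add_comm]
  exact key2

lemma hasSum_of_tendsto_box {n : ℕ} (g : (Fin n → ℕ) → ℝ) (hg : ∀ k, 0 ≤ g k) (a : ℝ)
    (hlim : Tendsto (fun N : ℕ => ∑ k ∈ Fintype.piFinset (fun _ : Fin n => Finset.range N), g k)
      atTop (𝓝 a)) : HasSum g a := by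
  have hmono : Monotone (fun N : ℕ => Fintype.piFinset (fun _ : Fin n => Finset.range N)) :=
    fun M N hMN => Fintype.piFinset_subset _ _ fun _ => Finset.range_mono hMN
  have hbox : Tendsto (fun N : ℕ => Fintype.piFinset (fun _ : Fin n => Finset.range N))
      atTop atTop := by
    refine tendsto_atTop_finset_of_monotone hmono fun k => ⟨∑ i, k i + 1, ?_⟩
    simp only [Fintype.mem_piFinset, Finset.mem_range]
    exact fun i => Nat.lt_succ_of_le
      (Finset.single_le_sum (f := k) (fun _ _ => Nat.zero_le _) (Finset.mem_univ i))
  have hsm : Monotone (fun s : Finset (Fin n → ℕ) => ∑ k ∈ s, g k) :=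
    fun s t hst => Finset.sum_le_sum_of_subset_of_nonneg hst fun k _ _ => hg k
  have hsum : Summable g := by
    refine summable_of_sum_le hg (c := a) fun s => ?_
    obtain ⟨N, hN⟩ := (hbox.eventually_ge_atTop s).exists
    exact (hsm hN).trans ((hsm.comp hmono).ge_of_tendsto hlim N)
  have := tendsto_nhds_unique (hsum.hasSum.comp hbox) hlim
  exact this ▸ hsum.hasSum

lemma commute_list_prod {n : ℕ} (S : Fin n → H →L[ℂ] H) (hS : ∀ i j, Commute (S i) (S j))
    (k : Fin n → ℕ) (L : List (Fin n)) (i : Fin n) (m : ℕ) :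
    Commute (S i ^ m) (L.map fun j => S j ^ k j).prod := by
  refine Commute.list_prod_right _ _ fun x hx => ?_
  obtain ⟨j, -, rfl⟩ := List.mem_map.1 hx
  exact (hS i j).pow_pow _ _

lemma finPow_mul {n : ℕ} (S : Fin n → H →L[ℂ] H) (hS : ∀ i j, Commute (S i) (S j))
    (a b : Fin n → ℕ) : finPow S a * finPow S b = finPow S (fun i => a i + b i) := by
  unfold finPow
  induction List.finRange n with
  | nil => simp
  | cons i L ih =>
    simp only [List.map_cons, List.prod_cons]
    rw [← ih, pow_add]
    have := (commute_list_prod S hS a L i (b i)).eq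
    simp only [mul_assoc]
    rw [← mul_assoc (S i ^ b i), this]
    simp only [mul_assoc]

lemma adjoint_finPow {n : ℕ} (T : Fin n → H →L[ℂ] H) (hT : ∀ i j, Commute (T i) (T j))
    (k : Fin n → ℕ) : adjoint (finPow T k) = finPow (fun i => adjoint (T i)) k := by
  unfold finPow
  simp only [← star_eq_adjoint]
  induction List.finRange n with
  | nil => simp
  | cons i L ih =>
    simp only [List.map_cons, List.prod_cons]
    rw [(commute_list_prod T hT k L i (k i)).eq, star_mul, ih, star_pow]

lemma op_mul_apply (A B : H →L[ℂ] H) (v : H) : (A * B) v = A (B v) := rfl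

lemma norm_pow_apply_le (A : H →L[ℂ] H) (hA : ‖A‖ ≤ 1) (m : ℕ) (v : H) :
    ‖(A ^ m) v‖ ≤ ‖v‖ := by
  induction m with
  | zero => simp
  | succ m ih =>
    rw [pow_succ', op_mul_apply]
    exact (A.le_of_opNorm_le hA _).trans (by simpa using ih)

lemma norm_list_prod_le {n : ℕ} (S : Fin n → H →L[ℂ] H) (hc : ∀ i, ‖S i‖ ≤ 1)
    (k : Fin n → ℕ) (L : List (Fin n)) (v : H) :
    ‖(L.map fun j => S j ^ k j).prod v‖ ≤ ‖v‖ := by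
  induction L with
  | nil => simp
  | cons i L ih =>
    simp only [List.map_cons, List.prod_cons, op_mul_apply]
    exact (norm_pow_apply_le _ (hc i) _ _).trans ih

/-- By commutativity `S i ^ k i` can be applied first; the other factors are contractions. -/
lemma norm_finPow_le {n : ℕ} (S : Fin n → H →L[ℂ] H) (hS : ∀ i j, Commute (S i) (S j))
    (hc : ∀ i, ‖S i‖ ≤ 1) (k : Fin n → ℕ) (i : Fin n) (v : H) :
    ‖finPow S k v‖ ≤ ‖(S i ^ k i) v‖ := by
  unfold finPow
  have hi := List.mem_finRange i
  generalize List.finRange n = L at hi ⊢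
  induction L with
  | nil => simp at hi
  | cons j L ih =>
    simp only [List.map_cons, List.prod_cons]
    rcases List.mem_cons.1 hi with rfl | h
    · rw [(commute_list_prod S hS k L i (k i)).eq, op_mul_apply]
      exact norm_list_prod_le S hc k L _
    · rw [op_mul_apply]
      exact (norm_pow_apply_le _ (hc j) _ _).trans (ih h)

/-- `‖D v‖² = ⟪v, D² v⟫`, expanded through the definition of `𝕊ₙ⁻¹(T, T*)`. -/
lemma norm_sq_defect {n : ℕ} (T : Fin n → H →L[ℂ] H) (D : H →L[ℂ] H) (hD : D.IsPositive)
    (hDsq : D * D = szegoInv T) (v : H) :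
    ‖D v‖ ^ 2 = ∑ ε : Fin n → Bool, (-1 : ℝ) ^ (∑ i, if ε i then 1 else 0) *
      ‖adjoint (finPow T (fun i => if ε i then 1 else 0)) v‖ ^ 2 := by
  have h1 : ((‖D v‖ ^ 2 : ℝ) : ℂ) = inner ℂ v (szegoInv T v) := by
    rw [← hDsq, op_mul_apply, ← adjoint_inner_left, hD.isSelfAdjoint.adjoint_eq,
      inner_self_eq_norm_sq_to_K]
    simp
  have h2 : ((‖D v‖ ^ 2 : ℝ) : ℂ) =
      ((∑ ε : Fin n → Bool, (-1 : ℝ) ^ (∑ i, if ε i then 1 else 0) *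
        ‖adjoint (finPow T (fun i => if ε i then 1 else 0)) v‖ ^ 2 : ℝ) : ℂ) := by
    rw [h1, szegoInv, sum_apply, inner_sum, Complex.ofReal_sum]
    refine Finset.sum_congr rfl fun ε _ => ?_
    rw [smul_apply, inner_smul_right, op_mul_apply, ← adjoint_inner_left,
      inner_self_eq_norm_sq_to_K]
    simp
  exact_mod_cast h2

/-- For a Szegő tuple `T` and the positive square root `D = D_{T*}` of
`𝕊ₙ⁻¹(T,T*)`, for every `h ∈ H` the family `(‖D_{T*} T^{*k} h‖²)_{k ∈ ℤ₊ⁿ}` is summable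
with sum `‖h‖²`. -/
theorem szego_dilation_isometry {n : ℕ} (hn : 0 < n) (T : Fin n → H →L[ℂ] H)
    (hT : IsSzegoTuple T) (D : H →L[ℂ] H) (hDpos : D.IsPositive)
    (hDsq : D * D = szegoInv T) (h : H) :
    HasSum (fun k : Fin n → ℕ => ‖D (finPow (fun i => adjoint (T i)) k h)‖ ^ 2) (‖h‖ ^ 2) := by
  have hS : ∀ i j, Commute (adjoint (T i)) (adjoint (T j)) := fun i j => by
    simpa only [← star_eq_adjoint] using Commute.star_star (hT.comm i j)
  have hc : ∀ i, ‖adjoint (T i)‖ ≤ 1 := fun i => by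
    rw [LinearIsometryEquiv.norm_map]; exact hT.contraction i
  set S : Fin n → H →L[ℂ] H := fun i => adjoint (T i) with hSdef
  have hterm : ∀ k : Fin n → ℕ, ‖D (finPow S k h)‖ ^ 2 = ∑ ε : Fin n → Bool,
      (-1 : ℝ) ^ (∑ i, if ε i then 1 else 0) *
        ‖finPow S (fun i => (if ε i then 1 else 0) + k i) h‖ ^ 2 := fun k => by
    rw [norm_sq_defect T D hDpos hDsq]
    refine Finset.sum_congr rfl fun ε _ => ?_
    rw [adjoint_finPow T hT.comm]
    change _ * ‖finPow S _ (finPow S k h)‖ ^ 2 = _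
    rw [← op_mul_apply, finPow_mul S hS]
  refine hasSum_of_tendsto_box _ (fun k => by positivity) _ ?_
  simp_rw [hterm, sum_box_eq (fun m => ‖finPow S m h‖ ^ 2)]
  -- Only `ε = 0` survives in the limit.
  have hsplit : ‖h‖ ^ 2 = ∑ ε : Fin n → Bool, (-1 : ℝ) ^ (∑ i, if ε i then 1 else 0) *
      (if ε = fun _ => false then ‖h‖ ^ 2 else 0) := by
    simp
  rw [hsplit]
  refine tendsto_finsetSum _ fun ε _ => Tendsto.const_mul _ ?_
  split_ifs with hε
  · subst hε
    simp [finPow]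
  · obtain ⟨i, hi⟩ : ∃ i, ε i = true := by
      by_contra! hcon
      exact hε (funext fun i => by simpa using hcon i)
    have h0 : Tendsto (fun N : ℕ => ‖(S i ^ N) h‖ ^ 2) atTop (𝓝 0) := by
      simpa using (hT.pure i h).norm.pow 2
    refine squeeze_zero (fun N => by positivity) (fun N => ?_) h0
    have := norm_finPow_le S hS hc (fun j => N * (if ε j then 1 else 0)) i h
    simp only [hi, if_true, mul_one] at this
    gcongr
end

section
/- Let T = (T_1, …, T_n) be a Szegő tuple on a complex Hilbert space H, and let i, j ∈ {1, …, n} with i ≠ j. Then T_j maps the defect space 𝒟_{T_i} into itself, i.e., T_j(𝒟_{T_i}) ⊆ 𝒟_{T_i}. -/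
/-!
Since `D` is positive, the closure of its range is the orthogonal complement of
`ker D = ker (I − Tᵢ* Tᵢ)`, so the claim is equivalent to the invariance of `ker (I − Tᵢ* Tᵢ)`
under `Tⱼ*` (`adjoint_fixed`).

The operator `𝕊⁻¹(T, T*)` is obtained from `I` by applying the maps `A ↦ A − Tₖ A Tₖ*`, one for
each `k` and in any order (`szegoOn_insert`). Because `Tₖ*ᵐ → 0` strongly, each of these maps
reflects positivity (`nonneg_of_sub_conj`), so all indices other than `i, j` can be removed. What
remains is
`‖Tⱼ* x‖² − ‖Tᵢ* Tⱼ* x‖² ≤ ‖x‖² − ‖Tᵢ* x‖²` (`pair_ineq`).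

Let `Tᵢ* Tᵢ h = h` and put `x = Tᵢ h`. The right-hand side is at most `0`, hence `Tᵢ*` does not
shrink `y = Tⱼ* Tᵢ h`, and therefore `Tᵢ Tᵢ* y = y` (`apply_adjoint_eq_self`). As
`Tᵢ* y = Tⱼ* Tᵢ* Tᵢ h = Tⱼ* h`, this reads `Tᵢ Tⱼ* h = y`, and so `Tᵢ* Tᵢ Tⱼ* h = Tᵢ* y = Tⱼ* h`.
-/


open ContinuousLinearMap Filter Topology

variable {H : Type*} [NormedAddCommGroup H] [InnerProductSpace ℂ H] [CompleteSpace H]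

/-- `T^t T^{t*}` with `T^t = ∏_{i ∈ t} Tᵢ`, the exponent being the indicator function of `t`. -/
noncomputable def szegoTerm {n : ℕ} (T : Fin n → H →L[ℂ] H) (t : Finset (Fin n)) : H →L[ℂ] H :=
  finPow T (fun i => if i ∈ t then 1 else 0) * adjoint (finPow T (fun i => if i ∈ t then 1 else 0))

/-- `∑_{t ⊆ S} (−1)^{|t|} T^t T^{t*}`: the operator `𝕊⁻¹` of the subtuple indexed by `S`. -/
noncomputable def szegoOn {n : ℕ} (T : Fin n → H →L[ℂ] H) (S : Finset (Fin n)) : H →L[ℂ] H :=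
  ∑ t ∈ S.powerset, ((-1 : ℂ) ^ t.card) • szegoTerm T t

lemma finPow_add {n : ℕ} (T : Fin n → H →L[ℂ] H) (hc : ∀ i j, T i * T j = T j * T i)
    (k l : Fin n → ℕ) : finPow T (fun i => k i + l i) = finPow T k * finPow T l := by
  unfold finPow
  induction List.finRange n with
  | nil => simp
  | cons a L ih =>
    simp only [List.map_cons, List.prod_cons]
    rw [ih, pow_add]
    have h : Commute (T a ^ l a) ((L.map fun i => T i ^ k i).prod) := by
      apply Commute.list_prod_right
      intro x hx
      obtain ⟨i, -, rfl⟩ := List.mem_map.1 hx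
      exact Commute.pow_pow (hc a i) _ _
    rw [mul_assoc, ← mul_assoc (T a ^ l a), h.eq]
    simp only [mul_assoc]

lemma finPow_single {n : ℕ} (T : Fin n → H →L[ℂ] H) (a : Fin n) :
    finPow T (fun i => if i = a then 1 else 0) = T a := by
  unfold finPow
  have h := List.prod_map_eq_pow_single (l := List.finRange n) a
    (fun i => T i ^ (if i = a then 1 else 0)) (by intro b hb _; simp [hb])
  rw [h, List.count_eq_one_of_mem (List.nodup_finRange n) (List.mem_finRange a)]
  simp

lemma szegoTerm_insert {n : ℕ} (T : Fin n → H →L[ℂ] H) (hc : ∀ i j, T i * T j = T j * T i)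
    {a : Fin n} {t : Finset (Fin n)} (ha : a ∉ t) :
    szegoTerm T (insert a t) = T a * szegoTerm T t * adjoint (T a) := by
  have h : finPow T (fun i => if i ∈ insert a t then 1 else 0)
      = T a * finPow T (fun i => if i ∈ t then 1 else 0) := by
    rw [← finPow_single T a, ← finPow_add T hc]
    congr 1
    funext i
    by_cases hi : i = a
    · subst hi; simp [ha]
    · simp [hi]
  unfold szegoTerm
  rw [h]
  simp only [← star_eq_adjoint, star_mul, mul_assoc]

/-- Adjoining an index `a` to the subtuple applies `I − Δ_{T a}`. -/
lemma szegoOn_insert {n : ℕ} (T : Fin n → H →L[ℂ] H) (hc : ∀ i j, T i * T j = T j * T i)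
    {a : Fin n} {S : Finset (Fin n)} (ha : a ∉ S) :
    szegoOn T (insert a S) = szegoOn T S - T a * szegoOn T S * adjoint (T a) := by
  unfold szegoOn
  rw [Finset.sum_powerset_insert ha, sub_eq_add_neg, Finset.mul_sum, Finset.sum_mul,
    ← Finset.sum_neg_distrib]
  congr 1
  refine Finset.sum_congr rfl fun t ht => ?_
  have hat : a ∉ t := fun h => ha (Finset.mem_powerset.1 ht h)
  rw [szegoTerm_insert T hc hat, Finset.card_insert_of_notMem hat, pow_succ]
  simp

lemma szegoOn_empty {n : ℕ} (T : Fin n → H →L[ℂ] H) : szegoOn T ∅ = 1 := by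
  have h : finPow T (fun _ => 0) = 1 := by simp [finPow]
  simp [szegoOn, szegoTerm, h, ← star_eq_adjoint]

lemma szegoOn_univ {n : ℕ} (T : Fin n → H →L[ℂ] H) : szegoOn T Finset.univ = szegoInv T := by
  unfold szegoOn szegoInv
  symm
  refine Finset.sum_bij' (fun k _ => Finset.univ.filter fun i => k i = true)
    (fun t _ => fun i => decide (i ∈ t)) ?_ ?_ ?_ ?_ ?_
  · simp
  · simp
  · intro k _; funext i; simp
  · intro t _; ext i; simp
  · intro k _
    simp only [szegoTerm, Finset.card_filter, Finset.mem_filter, Finset.mem_univ, true_and]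

/-- If `A − X A X* ≥ 0` and `X*ᵐ → 0` strongly then `A ≥ 0`, because
`⟪A x, x⟫ ≥ ⟪A X*ᵐ x, X*ᵐ x⟫ → 0`. Nonnegativity is that of the real part of the quadratic form. -/
lemma nonneg_of_sub_conj (A X : H →L[ℂ] H)
    (hX : ∀ h : H, Tendsto (fun m : ℕ => (adjoint X ^ m) h) atTop (𝓝 0))
    (h : ∀ x, 0 ≤ (A - X * A * adjoint X).reApplyInnerSelf x) (x : H) :
    0 ≤ A.reApplyInnerSelf x := by
  have step (x : H) : A.reApplyInnerSelf (adjoint X x) ≤ A.reApplyInnerSelf x := by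
    have := h x
    have e : (X * A * adjoint X) x = X (A (adjoint X x)) := rfl
    simp only [reApplyInnerSelf_apply, sub_apply, e, inner_sub_left, map_sub] at this ⊢
    rw [← adjoint_inner_right X] at this
    linarith
  have anti (m : ℕ) : A.reApplyInnerSelf ((adjoint X ^ m) x) ≤ A.reApplyInnerSelf x := by
    induction m with
    | zero => simp
    | succ m ih =>
      rw [pow_succ']
      exact (step _).trans ih
  have lim : Tendsto (fun m : ℕ => A.reApplyInnerSelf ((adjoint X ^ m) x)) atTop (𝓝 0) := by
    have := (A.reApplyInnerSelf_continuous.tendsto 0).comp (hX x)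
    simpa [Function.comp_def, reApplyInnerSelf_apply] using this
  exact le_of_tendsto' lim anti

/-- Positivity of `𝕊⁻¹` passes to subtuples when the removed operators are of class `C_{·0}`. -/
lemma szegoOn_nonneg_of_union {n : ℕ} (T : Fin n → H →L[ℂ] H)
    (hc : ∀ i j, T i * T j = T j * T i)
    (hp : ∀ i (h : H), Tendsto (fun m : ℕ => (adjoint (T i) ^ m) h) atTop (𝓝 0))
    (R S : Finset (Fin n)) (h : ∀ x, 0 ≤ (szegoOn T (S ∪ R)).reApplyInnerSelf x) :
    ∀ x, 0 ≤ (szegoOn T R).reApplyInnerSelf x := by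
  induction S using Finset.induction_on with
  | empty => simpa using h
  | insert a S _ ih =>
    apply ih
    rw [Finset.insert_union] at h
    by_cases ha : a ∈ S ∪ R
    · rwa [Finset.insert_eq_of_mem ha] at h
    · rw [szegoOn_insert T hc ha] at h
      exact nonneg_of_sub_conj _ _ (hp a) h

/-- The Brehmer-type inequality for a pair of entries of a Szegő tuple. -/
lemma pair_ineq {n : ℕ} {T : Fin n → H →L[ℂ] H} (hT : IsSzegoTuple T) {i j : Fin n}
    (hij : i ≠ j) (x : H) :
    ‖adjoint (T j) x‖ ^ 2 - ‖adjoint (T i) (adjoint (T j) x)‖ ^ 2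
      ≤ ‖x‖ ^ 2 - ‖adjoint (T i) x‖ ^ 2 := by
  have h := szegoOn_nonneg_of_union T hT.comm hT.pure {j, i} Finset.univ (by
    intro x
    rw [Finset.union_eq_left.2 (Finset.subset_univ _), szegoOn_univ]
    exact hT.pos.2 x) x
  have hi : szegoOn T {i} = 1 - T i * adjoint (T i) := by
    rw [← insert_empty_eq, szegoOn_insert T hT.comm (Finset.notMem_empty i), szegoOn_empty, mul_one]
  rw [szegoOn_insert T hT.comm (by simpa using hij.symm), hi] at h
  have e : (1 - T i * adjoint (T i) - T j * (1 - T i * adjoint (T i)) * adjoint (T j)) x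
      = x - T i (adjoint (T i) x) - T j (adjoint (T j) x - T i (adjoint (T i) (adjoint (T j) x))) :=
    rfl
  simp only [reApplyInnerSelf_apply, e, inner_sub_left, map_sub] at h
  simp only [← adjoint_inner_right (T i), ← adjoint_inner_right (T j),
    inner_self_eq_norm_sq] at h
  linarith

/-- A contraction whose adjoint preserves the norm of `y` satisfies `X X* y = y`. -/
lemma apply_adjoint_eq_self {X : H →L[ℂ] H} (hX : ‖X‖ ≤ 1) {y : H}
    (hy : ‖y‖ ≤ ‖adjoint X y‖) : X (adjoint X y) = y := by
  have h1 : ‖X (adjoint X y)‖ ≤ ‖adjoint X y‖ := by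
    simpa using X.le_of_opNorm_le hX (adjoint X y)
  have h2 := norm_sub_sq (𝕜 := ℂ) (X (adjoint X y)) y
  rw [← adjoint_inner_right, inner_self_eq_norm_sq] at h2
  have h3 : ‖X (adjoint X y) - y‖ ^ 2 ≤ 0 := by
    nlinarith [norm_nonneg (X (adjoint X y)), norm_nonneg y, norm_nonneg (adjoint X y)]
  exact sub_eq_zero.1 (norm_eq_zero.1 (pow_eq_zero_iff two_ne_zero |>.1 (le_antisymm h3 (sq_nonneg _))))

/-- `Tⱼ*` leaves `ker (I − Tᵢ* Tᵢ)` invariant: the pair inequality at `Tᵢ h` forces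
`Tᵢ*` to be isometric at `Tⱼ* Tᵢ h`. -/
lemma adjoint_fixed {n : ℕ} {T : Fin n → H →L[ℂ] H} (hT : IsSzegoTuple T) {i j : Fin n}
    (hij : i ≠ j) {h : H} (hh : adjoint (T i) (T i h) = h) :
    adjoint (T i) (T i (adjoint (T j) h)) = adjoint (T j) h := by
  have hcomm (x : H) : adjoint (T i) (adjoint (T j) x) = adjoint (T j) (adjoint (T i) x) := by
    have := congrArg star (hT.comm j i)
    simp only [star_mul, star_eq_adjoint] at this
    exact congrArg (fun A : H →L[ℂ] H => A x) this
  have hle : ‖T i h‖ ≤ ‖h‖ := by simpa using (T i).le_of_opNorm_le (hT.contraction i) h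
  have hp := pair_ineq hT hij (T i h)
  rw [hh] at hp
  have hn : ‖adjoint (T j) (T i h)‖ ≤ ‖adjoint (T i) (adjoint (T j) (T i h))‖ := by
    refine abs_le_of_sq_le_sq' ?_ (norm_nonneg _) |>.2
    nlinarith [norm_nonneg (T i h), norm_nonneg h]
  have hy := apply_adjoint_eq_self (hT.contraction i) hn
  rw [hcomm, hh] at hy
  rw [hy, hcomm, hh]

/-- For a Szegő tuple `T` and `i ≠ j`, `Tⱼ` maps the defect space
`𝒟_{Tᵢ}` (the closure of the range of `D_{Tᵢ} = (I − Tᵢ*Tᵢ)^{1/2}`) into itself. -/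
theorem szego_maps_defect_into_itself {n : ℕ} (hn : 0 < n) (T : Fin n → H →L[ℂ] H)
    (hT : IsSzegoTuple T) (i j : Fin n) (hij : i ≠ j)
    (D : H →L[ℂ] H) (hDpos : D.IsPositive) (hDsq : D * D = 1 - adjoint (T i) * T i) :
    ⇑(T j) '' closure (Set.range ⇑D) ⊆ closure (Set.range ⇑D) := by
  have hsa : adjoint D = D := hDpos.isSelfAdjoint
  have hcl : closure (Set.range ⇑D) = ((LinearMap.ker D.toLinearMap)ᗮ : Set H) := by
    have h1 := D.orthogonal_range
    rw [hsa] at h1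
    rw [← h1, Submodule.orthogonal_orthogonal_eq_closure]
    rfl
  have hsq (x : H) : D (D x) = x - adjoint (T i) (T i x) :=
    congrArg (fun A : H →L[ℂ] H => A x) hDsq
  have hker (x : H) (hx : adjoint (T i) (T i x) = x) : D x = 0 := by
    rw [← inner_self_eq_zero (𝕜 := ℂ), ← adjoint_inner_right, hsa, hsq, hx, sub_self,
      inner_zero_right]
  rw [hcl]
  rintro _ ⟨y, hy, rfl⟩
  simp only [SetLike.mem_coe, Submodule.mem_orthogonal] at hy ⊢
  intro u hu
  have hu0 : D u = 0 := hu
  have hfix : adjoint (T i) (T i u) = u := by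
    have := hsq u
    rw [hu0, map_zero] at this
    exact (sub_eq_zero.1 this.symm).symm
  rw [← adjoint_inner_left]
  exact hy _ (hker _ (adjoint_fixed hT hij hfix))
end

section
/- Let T = (T_1, …, T_n) be a Szegő tuple on a complex Hilbert space H, and let i, j ∈ {1, …, n} with i ≠ j. Then T_j D²_{T_i} T_j* ≤ D²_{T_i}, i.e., T_j (I − T_i* T_i) T_j* ≤ I − T_i* T_i in the ordering of self-adjoint operators. -/
/-!
Write `A = T i`, `B = T j`. Two facts give the result.

* Every subtuple of a Szegő tuple again has a positive Szegő operator: writing `E S` for the Szegő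
  operator of the subtuple indexed by `S`, one has `E (S ∪ {a}) = E S - T a (E S) (T a)*`, so
  positivity of the left side gives `E S ≥ (T a)^m (E S) (T a)*^m`, whose quadratic form tends to
  `0` because `T a` is of class `C_{·0}` (`rePos_of_sub_conj`). Removing all indices but `i, j`
  yields `‖B*g‖² - ‖A*B*g‖² ≤ ‖g‖² - ‖A*g‖²` for every `g`.

* For vectors `h, g` put `Q(h, g) = ‖h‖² + ‖g‖² - 2 Re ⟪A h, g⟫`. Completing the square in two ways,
  `Q(h, g) = (‖h‖² - ‖A h‖²) + ‖g - A h‖² = (‖g‖² - ‖A* g‖²) + ‖h - A* g‖²`.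
  The second form, with the inequality above and `‖B*‖ ≤ 1`, shows `Q(B*h, B*g) ≤ Q(h, g)`; the
  first form with `g = A h` turns this into
  `‖B*h‖² - ‖A B*h‖² ≤ Q(B*h, B*A h) ≤ Q(h, A h) = ‖h‖² - ‖A h‖²`, which is the claim.
-/


open ContinuousLinearMap Filter Topology

variable {H : Type*} [NormedAddCommGroup H] [InnerProductSpace ℂ H] [CompleteSpace H]

/-- The quadratic form of `B` has nonnegative real part. Self-adjointness is not required, which
makes the notion convenient for intermediate steps. -/
def RePos (B : H →L[ℂ] H) : Prop := ∀ h, 0 ≤ (inner ℂ (B h) h).re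

/-- If `A` is of class `C_{·0}` and `B - A B A* ≥ 0`, then `B ≥ 0`. -/
lemma rePos_of_sub_conj (A B : H →L[ℂ] H)
    (hA : ∀ h : H, Tendsto (fun m : ℕ => (adjoint A ^ m) h) atTop (𝓝 0))
    (hB : RePos (B - A * B * adjoint A)) : RePos B := by
  intro h
  have step : ∀ m : ℕ, (inner ℂ (B ((adjoint A ^ m) h)) ((adjoint A ^ m) h)).re
      ≤ (inner ℂ (B h) h).re := by
    intro m
    induction m with
    | zero => simp
    | succ m ih =>
      refine le_trans ?_ ih
      have := hB ((adjoint A ^ m) h)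
      simp only [sub_apply, mul_apply_eq_comp, inner_sub_left, Complex.sub_re] at this
      rw [← adjoint_inner_right A] at this
      rw [pow_succ', mul_apply_eq_comp]
      linarith
  have lim : Tendsto (fun m : ℕ => (inner ℂ (B ((adjoint A ^ m) h)) ((adjoint A ^ m) h)).re)
      atTop (𝓝 0) := by
    have h1 : Tendsto (fun m : ℕ => B ((adjoint A ^ m) h)) atTop (𝓝 (B 0)) :=
      (B.continuous.tendsto 0).comp (hA h)
    have h2 := (Complex.continuous_re.tendsto _).comp (h1.inner (𝕜 := ℂ) (hA h))
    simpa [Function.comp_def] using h2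
  exact le_of_tendsto' lim step

/-- The 0-1 multi-index of a finite set. -/
def indic {n : ℕ} (P : Finset (Fin n)) : Fin n → ℕ := fun i => if i ∈ P then 1 else 0

/-- Adding `a` to the index set multiplies the ordered product by `T a`: only the factor at `a`
changes, and by commutativity it can be moved to the front. -/
lemma list_prod_update {n : ℕ} (T : Fin n → H →L[ℂ] H) (hc : ∀ i j, T i * T j = T j * T i)
    (a : Fin n) (P : Finset (Fin n)) (ha : a ∉ P) (L : List (Fin n)) (hL : L.Nodup) :
    (L.map fun i => T i ^ indic (insert a P) i).prod =
      (if a ∈ L then T a else 1) * (L.map fun i => T i ^ indic P i).prod := by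
  induction L with
  | nil => simp
  | cons b L ih =>
    rw [List.nodup_cons] at hL
    simp only [List.map_cons, List.prod_cons, ih hL.2]
    by_cases hab : a = b
    · subst hab
      simp [indic, ha, hL.1]
    · have h1 : indic (insert a P) b = indic P b := by
        simp [indic, Ne.symm hab]
      have h2 : Commute (T b ^ indic P b) (if a ∈ L then T a else 1) := by
        split_ifs
        · exact Commute.pow_left (hc b a) _
        · exact Commute.one_right _
      simp only [List.mem_cons, hab, false_or, h1]
      rw [← mul_assoc, h2.eq, mul_assoc]

lemma finPow_insert {n : ℕ} (T : Fin n → H →L[ℂ] H) (hc : ∀ i j, T i * T j = T j * T i)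
    (a : Fin n) (P : Finset (Fin n)) (ha : a ∉ P) :
    finPow T (indic (insert a P)) = T a * finPow T (indic P) := by
  simp [finPow, list_prod_update T hc a P ha _ (List.nodup_finRange n)]

/-- The Szegő operator of the subtuple of `T` indexed by `S`. -/
noncomputable def subSzego {n : ℕ} (T : Fin n → H →L[ℂ] H) (S : Finset (Fin n)) : H →L[ℂ] H :=
  ∑ P ∈ S.powerset, ((-1 : ℂ) ^ P.card) • (finPow T (indic P) * adjoint (finPow T (indic P)))

lemma subSzego_empty {n : ℕ} (T : Fin n → H →L[ℂ] H) : subSzego T ∅ = 1 := by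
  have h : finPow T (indic ∅) = 1 := by simp [finPow, indic]
  have h' : adjoint (1 : H →L[ℂ] H) = 1 := star_one _
  simp [subSzego, h, h']

lemma subSzego_insert {n : ℕ} (T : Fin n → H →L[ℂ] H) (hc : ∀ i j, T i * T j = T j * T i)
    (a : Fin n) (S : Finset (Fin n)) (ha : a ∉ S) :
    subSzego T (insert a S) = subSzego T S - T a * subSzego T S * adjoint (T a) := by
  unfold subSzego
  rw [Finset.sum_powerset_insert ha, sub_eq_add_neg]
  congr 1
  rw [Finset.mul_sum, Finset.sum_mul, ← Finset.sum_neg_distrib]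
  refine Finset.sum_congr rfl fun P hP => ?_
  have haP : a ∉ P := fun h => ha (Finset.mem_powerset.1 hP h)
  have hadj : adjoint (T a * finPow T (indic P)) =
      adjoint (finPow T (indic P)) * adjoint (T a) := adjoint_comp _ _
  rw [Finset.card_insert_of_notMem haP, finPow_insert T hc a P haP, hadj, pow_succ]
  simp [mul_assoc]

lemma subSzego_univ {n : ℕ} (T : Fin n → H →L[ℂ] H) : subSzego T Finset.univ = szegoInv T := by
  unfold subSzego szegoInv
  rw [Finset.powerset_univ]
  refine Finset.sum_bij' (fun P _ i => decide (i ∈ P))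
    (fun k _ => Finset.univ.filter fun i => k i = true) ?_ ?_ ?_ ?_ ?_
  · simp
  · simp
  · intro P _; ext; simp
  · intro k _; funext i; simp
  · intro P _
    have h : indic P = fun i => if decide (i ∈ P) = true then 1 else 0 := by
      funext i; simp [indic]
    rw [← h]
    rw [show (∑ i, indic P i) = P.card by simp [indic]]

/-- Subtuples of a Szegő tuple have positive Szegő operators. -/
lemma rePos_subSzego {n : ℕ} (T : Fin n → H →L[ℂ] H) (hT : IsSzegoTuple T)
    (S : Finset (Fin n)) : RePos (subSzego T S) := by
  suffices h : ∀ R : Finset (Fin n), RePos (subSzego T Rᶜ) by simpa using h Sᶜ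
  intro R
  induction R using Finset.induction_on with
  | empty =>
    rw [Finset.compl_empty, subSzego_univ]
    exact fun h => hT.pos.re_inner_nonneg_left h
  | insert a R ha ih =>
    have h1 : Rᶜ = insert a (insert a R)ᶜ := by
      ext x
      by_cases hx : x = a
      · subst hx; simp [ha]
      · simp [hx]
    rw [h1, subSzego_insert T hT.comm a _ (by simp)] at ih
    exact rePos_of_sub_conj _ _ (hT.pure a) ih

lemma norm_sq_sub (x y : H) :
    ‖x - y‖ ^ 2 = ‖x‖ ^ 2 - 2 * (inner ℂ x y).re + ‖y‖ ^ 2 := norm_sub_sq (𝕜 := ℂ) x y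

/-- The statement for a pair of commuting operators. `hpair` says that the quadratic form of
`1 - AA* - BB* + BAA*B*` is nonnegative; no `C_{·0}` condition is needed. -/
lemma defect_le (A B : H →L[ℂ] H) (hc : A * B = B * A) (hB : ‖B‖ ≤ 1)
    (hpair : ∀ g, ‖adjoint B g‖ ^ 2 - ‖adjoint A (adjoint B g)‖ ^ 2 ≤ ‖g‖ ^ 2 - ‖adjoint A g‖ ^ 2)
    (h : H) :
    ‖adjoint B h‖ ^ 2 - ‖A (adjoint B h)‖ ^ 2 ≤ ‖h‖ ^ 2 - ‖A h‖ ^ 2 := by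
  have hcomm : ∀ x, adjoint A (adjoint B x) = adjoint B (adjoint A x) := by
    intro x
    have h1 : adjoint (B * A) = adjoint A * adjoint B := adjoint_comp _ _
    have h2 : adjoint (A * B) = adjoint B * adjoint A := adjoint_comp _ _
    rw [← mul_apply_eq_comp, ← mul_apply_eq_comp, ← h1, ← h2, hc]
  -- The two ways of completing the square in `Q(x, g)`.
  have key : ∀ x g, (‖x‖ ^ 2 - ‖A x‖ ^ 2) + ‖g - A x‖ ^ 2 =
      (‖g‖ ^ 2 - ‖adjoint A g‖ ^ 2) + ‖x - adjoint A g‖ ^ 2 := by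
    intro x g
    have hin : (inner ℂ g (A x)).re = (inner ℂ x (adjoint A g)).re := by
      rw [adjoint_inner_right, ← inner_conj_symm, Complex.conj_re]
    rw [norm_sq_sub, norm_sq_sub, hin]
    ring
  have e1 := key h (A h)
  have e2 := key (adjoint B h) (adjoint B (A h))
  have e3 := hpair (A h)
  have e4 : ‖adjoint B h - adjoint A (adjoint B (A h))‖ ^ 2 ≤ ‖h - adjoint A (A h)‖ ^ 2 := by
    rw [hcomm, ← map_sub]
    gcongr
    refine ((adjoint B).le_of_opNorm_le (c := 1) ?_ _).trans_eq (one_mul _)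
    rwa [LinearIsometryEquiv.norm_map]
  rw [sub_self, norm_zero] at e1
  have e5 := sq_nonneg ‖adjoint B (A h) - A (adjoint B h)‖
  linarith

lemma re_inner_self (x : H) : (inner ℂ x x).re = ‖x‖ ^ 2 := inner_self_eq_norm_sq (𝕜 := ℂ) x

/-- For a Szegő tuple `T` and `i ≠ j`,
`Tⱼ (I − Tᵢ*Tᵢ) Tⱼ* ≤ I − Tᵢ*Tᵢ`. -/
theorem szego_defectSq_dominates {n : ℕ} (hn : 0 < n) (T : Fin n → H →L[ℂ] H)
    (hT : IsSzegoTuple T) (i j : Fin n) (hij : i ≠ j) :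
    ((1 - adjoint (T i) * T i) -
      T j * (1 - adjoint (T i) * T i) * adjoint (T j)).IsPositive := by
  have hpos := rePos_subSzego T hT {i, j}
  have hjj : subSzego T {j} = 1 - T j * adjoint (T j) := by
    simpa [subSzego_empty] using subSzego_insert T hT.comm j ∅ (by simp)
  have hsa : IsSelfAdjoint (1 - adjoint (T i) * T i) :=
    (IsSelfAdjoint.one _).sub (IsSelfAdjoint.star_mul_self (T i))
  rw [isPositive_def']
  refine ⟨hsa.sub (hsa.conjugate (T j)), fun h => ?_⟩
  have main := defect_le (T i) (T j) (hT.comm i j) (hT.contraction j) (fun g => ?_) h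
  · rw [reApplyInnerSelf_apply]
    simp only [sub_apply, mul_apply_eq_comp, one_apply_eq_self, inner_sub_left, map_sub]
    simp only [← adjoint_inner_right (T j), adjoint_inner_left (T i),
      RCLike.re_to_complex, re_inner_self]
    linarith
  · have hg := hpos g
    rw [show ({i, j} : Finset (Fin n)) = insert i {j} from rfl,
      subSzego_insert T hT.comm i {j} (by simpa using hij), hjj] at hg
    have hcomm : adjoint (T j) (adjoint (T i) g) = adjoint (T i) (adjoint (T j) g) := by
      have h1 : adjoint (T i * T j) = adjoint (T j) * adjoint (T i) := adjoint_comp _ _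
      have h2 : adjoint (T j * T i) = adjoint (T i) * adjoint (T j) := adjoint_comp _ _
      rw [← mul_apply_eq_comp, ← mul_apply_eq_comp, ← h1, ← h2, hT.comm]
    simp only [sub_apply, mul_apply_eq_comp, one_apply_eq_self, inner_sub_left, map_sub] at hg
    simp only [← adjoint_inner_right (T i), ← adjoint_inner_right (T j), hcomm,
      re_inner_self, Complex.sub_re] at hg
    linarith
end

section
/- Let T = (T_1, …, T_n) be a Szegő tuple on a complex Hilbert space H, and let i, j ∈ {1, …, n} with i ≠ j. Then T_j D²_{T_i*} T_j* ≤ D²_{T_i*}, i.e., T_j (I − T_i T_i*) T_j* ≤ I − T_i T_i* in the ordering of self-adjoint operators. -/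
/-!
Write `Δ_X(A) = X A X*`. The maps `1 - Δ_{T k}` commute because the `T k` do, and expanding their
product at the identity gives `szegoInv T = (∏_k (1 - Δ_{T k}))(1)` (`szegoInv_eq_applyDelta`).

If `X` is of class `C_{·0}` and `A` is self-adjoint with `A - X A X* ≥ 0`, then
`⟪A h, h⟫ ≥ ⟪A X*^m h, X*^m h⟫ → 0`, so `A ≥ 0` (`isPositive_of_sub_conj`). Hence factors can be
stripped from the product one at a time without losing positivity. Stripping every factor except
those of `i` and `j` leaves `(1 - Δ_{T j})(1 - Δ_{T i})(1) ≥ 0`, which is the claim.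
-/

open ContinuousLinearMap Filter Topology

variable {H : Type*} [NormedAddCommGroup H] [InnerProductSpace ℂ H] [CompleteSpace H]

/-- A self-adjoint solution `A` of `A - X A X* ≥ 0` is positive when `X` is of class `C_{·0}`. -/
theorem isPositive_of_sub_conj {X A : H →L[ℂ] H} (hA : IsSelfAdjoint A)
    (hX : ∀ h : H, Tendsto (fun m : ℕ => (adjoint X ^ m) h) atTop (𝓝 0))
    (hpos : (A - X * A * adjoint X).IsPositive) : A.IsPositive := by
  have step : ∀ h : H, A.reApplyInnerSelf (adjoint X h) ≤ A.reApplyInnerSelf h := by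
    intro h
    have h1 := hpos.re_inner_nonneg_left h
    have e : inner ℂ (X (A (adjoint X h))) h = inner ℂ (A (adjoint X h)) (adjoint X h) :=
      (ContinuousLinearMap.adjoint_inner_right X _ _).symm
    simp only [sub_apply, mul_apply_eq_comp, inner_sub_left, map_sub, e] at h1
    simp only [ContinuousLinearMap.reApplyInnerSelf_apply]
    linarith
  have iter : ∀ (m : ℕ) (h : H), A.reApplyInnerSelf ((adjoint X ^ m) h) ≤ A.reApplyInnerSelf h := by
    intro m
    induction m with
    | zero => intro h; simp
    | succ m ih =>
      intro h
      rw [pow_succ']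
      exact (step _).trans (ih h)
  refine (ContinuousLinearMap.isPositive_def').2 ⟨hA, fun h => ?_⟩
  have lim : Tendsto (fun m : ℕ => A.reApplyInnerSelf ((adjoint X ^ m) h)) atTop (𝓝 0) := by
    have := (A.reApplyInnerSelf_continuous.tendsto 0).comp (hX h)
    simpa [ContinuousLinearMap.reApplyInnerSelf_apply, Function.comp_def] using this
  exact le_of_tendsto' lim fun m => iter m h

theorem applyDelta_cons {n : ℕ} (T : Fin n → H →L[ℂ] H) (k : Fin n) (L : List (Fin n))
    (A : H →L[ℂ] H) :
    applyDelta T (k :: L) A = applyDelta T L A - T k * applyDelta T L A * adjoint (T k) := rfl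

theorem isSelfAdjoint_applyDelta {n : ℕ} (T : Fin n → H →L[ℂ] H) (L : List (Fin n)) :
    IsSelfAdjoint (applyDelta T L 1) := by
  induction L with
  | nil => exact IsSelfAdjoint.one _
  | cons k L ih =>
    rw [applyDelta_cons, ← ContinuousLinearMap.star_eq_adjoint]
    exact ih.sub (ih.conjugate (T k))

theorem applyDelta_perm {n : ℕ} {T : Fin n → H →L[ℂ] H} (hc : ∀ i j, T i * T j = T j * T i)
    {L M : List (Fin n)} (h : L.Perm M) (A : H →L[ℂ] H) :
    applyDelta T L A = applyDelta T M A := by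
  have : LeftCommutative fun (k : Fin n) (B : H →L[ℂ] H) => B - T k * B * adjoint (T k) := by
    refine ⟨fun a b B => ?_⟩
    have e1 : T a * (T b * B * adjoint (T b)) * adjoint (T a)
        = T b * (T a * B * adjoint (T a)) * adjoint (T b) := by
      have e2 : adjoint (T b) * adjoint (T a) = adjoint (T a) * adjoint (T b) := by
        simp only [← ContinuousLinearMap.star_eq_adjoint, ← star_mul, hc a b]
      calc _ = (T a * T b) * B * (adjoint (T b) * adjoint (T a)) := by simp only [mul_assoc]
        _ = (T b * T a) * B * (adjoint (T a) * adjoint (T b)) := by rw [hc a b, e2]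
        _ = _ := by simp only [mul_assoc]
    simp only [mul_sub, sub_mul, e1]
    abel
  exact h.foldr_eq A

/-- The outermost factors `1 - Δ_{T k}` can be stripped while preserving positivity. -/
theorem isPositive_applyDelta_of_append {n : ℕ} {T : Fin n → H →L[ℂ] H}
    (hp : ∀ i (h : H), Tendsto (fun m : ℕ => (adjoint (T i) ^ m) h) atTop (𝓝 0))
    (L M : List (Fin n)) (h : (applyDelta T (L ++ M) 1).IsPositive) :
    (applyDelta T M 1).IsPositive := by
  induction L with
  | nil => exact h
  | cons k L ih => exact ih (isPositive_of_sub_conj (isSelfAdjoint_applyDelta T _) (hp k) h)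

theorem finPow_cons {n : ℕ} (T : Fin (n + 1) → H →L[ℂ] H) (k : Fin (n + 1) → ℕ) :
    finPow T k = T 0 ^ k 0 * finPow (fun i => T i.succ) (fun i => k i.succ) := by
  simp [finPow, List.finRange_succ, Function.comp_def]

/-- `𝕊ₙ⁻¹(T, T*)` is the product of the maps `1 - Δ_{T k}` evaluated at the identity. -/
theorem szegoInv_eq_applyDelta {n : ℕ} (T : Fin n → H →L[ℂ] H) :
    szegoInv T = applyDelta T (List.finRange n) 1 := by
  induction n with
  | zero => simp [szegoInv, applyDelta, finPow, ← ContinuousLinearMap.star_eq_adjoint]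
  | succ n ih =>
    have e : applyDelta T ((List.finRange n).map Fin.succ) 1
        = szegoInv (fun i : Fin n => T i.succ) := by
      rw [ih]; simp [applyDelta, List.foldr_map]
    rw [List.finRange_succ, applyDelta_cons, e]
    unfold szegoInv
    rw [← (Fin.consEquiv fun _ : Fin (n + 1) => Bool).sum_comp, Fintype.sum_prod_type,
      Fintype.sum_bool, add_comm, sub_eq_add_neg]
    congr 1
    · refine Finset.sum_congr rfl fun k _ => ?_
      simp [Fin.sum_univ_succ, finPow_cons, -Finset.sum_boole]
    · rw [Finset.mul_sum, Finset.sum_mul, ← Finset.sum_neg_distrib]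
      refine Finset.sum_congr rfl fun k _ => ?_
      simp only [← ContinuousLinearMap.star_eq_adjoint]
      simp [Fin.sum_univ_succ, finPow_cons, pow_add, mul_assoc, -Finset.sum_boole]

/-- For a Szegő tuple `T` and `i ≠ j`,
`Tⱼ (I − Tᵢ Tᵢ*) Tⱼ* ≤ I − Tᵢ Tᵢ*`. -/
theorem szego_defectStarSq_dominates {n : ℕ} (hn : 0 < n) (T : Fin n → H →L[ℂ] H)
    (hT : IsSzegoTuple T) (i j : Fin n) (hij : i ≠ j) :
    ((1 - T i * adjoint (T i)) -
      T j * (1 - T i * adjoint (T i)) * adjoint (T j)).IsPositive := by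
  have hperm : (List.finRange n).Perm
      ((((List.finRange n).erase j).erase i) ++ [j, i]) := by
    have hj : j ∈ List.finRange n := List.mem_finRange j
    have hi : i ∈ (List.finRange n).erase j :=
      (List.mem_erase_of_ne hij).2 (List.mem_finRange i)
    refine (List.perm_cons_erase hj).trans ?_
    refine ((List.perm_cons_erase hi).cons j).trans ?_
    exact List.perm_append_comm (l₁ := [j, i])
  have hpos := hT.pos
  rw [szegoInv_eq_applyDelta, applyDelta_perm hT.comm hperm] at hpos
  simpa [applyDelta] using isPositive_applyDelta_of_append hT.pure _ _ hpos
end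

section
/- Let T = (T_1, …, T_n) be a Beurling tuple on a complex Hilbert space H, let j ∈ {1, …, n}, let P ⊆ {1, …, n} \ {j}, and let i ∈ {1, …, n} \ (P ∪ {j}). Then T_i D²_{j,T,P} T_i* ≤ D²_{j,T,P} in the ordering of self-adjoint operators. -/
/-!
The operator `D²_{j,T,P} - Tᵢ D²_{j,T,P} Tᵢ*` is `∏_{k ∈ {i} ∪ P} (I - Δ_{T k})(I - Tⱼ* Tⱼ)`, so
the claim is that every truncated defect operator of a Beurling tuple is positive.

Write `𝕊⁻¹(T, T*) = D* D`. Telescoping in each variable, together with `C_{·0}`, gives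
`∑_α T^α D* D T^{*α} = I` (`box_sum`, `applyDelta_pow_tendsto`, `hasSum_szego`), hence
`V h = (D T^{*α} h)_α` is an isometry of `H` into `ℓ²(ℕⁿ, H)` with `V T_k* = M_k* V`, where the
`M_k` are the shifts, a family of doubly commuting isometries (`exists_coextension`).

Let `p = I - V V*`, the projection onto an `M`-invariant subspace. Then `I - T_k* T_k = Y_k* Y_k`
with `Y_k = p M_k V`, so the Beurling condition is equivalent to `Y_k Y_l* = 0` for `k ≠ l`, i.e.
`p M_k (I - p) M_l* p = 0`. This says that the restrictions of the `M_k` to `ran p` doubly commute.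
Consequently `∏_{k ∈ L} (I - Δ_{M_k})(p)` is a product of commuting wandering projections, so it is
a projection (`applyDelta_projection`). Finally the truncated defect operator is the compression
`V* M_j* (·) M_j V` of such a projection, with `L = {i, j} ∪ P`, hence positive
(`positive_of_dilation`).
-/

open ContinuousLinearMap Filter Topology

variable {H : Type*} [NormedAddCommGroup H] [InnerProductSpace ℂ H] [CompleteSpace H]

/-! ### Doubly commuting isometries on an invariant subspace -/

section Wandering

variable {K : Type*} [NormedAddCommGroup K] [InnerProductSpace ℂ K] [CompleteSpace K]

/-- Let `p` be the projection onto a subspace invariant under the isometries `M k`. If the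
restrictions to `ran p` doubly commute, then `∏_{k ∈ L} (I - Δ_{M k})(p)` is the product of the
commuting wandering projections `p - M k p (M k)*`, hence is itself a projection. -/
theorem applyDelta_projection {n : ℕ} (M : Fin n → K →L[ℂ] K) (p : K →L[ℂ] K)
    (hp : star p = p) (hpp : p * p = p)
    (iso : ∀ k, star (M k) * M k = 1)
    (comm : ∀ k l, M k * M l = M l * M k)
    (dc : ∀ k l, k ≠ l → star (M k) * M l = M l * star (M k))
    (inv : ∀ k, p * M k * p = M k * p)
    (orth : ∀ k l, k ≠ l → p * M k * (1 - p) * star (M l) * p = 0)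
    (L : List (Fin n)) (hL : L.Nodup) :
    star (applyDelta M L p) = applyDelta M L p ∧
    applyDelta M L p * applyDelta M L p = applyDelta M L p ∧
    p * applyDelta M L p = applyDelta M L p ∧
    ∀ k, k ∉ L → M k * applyDelta M L p = applyDelta M L p * M k * p := by
  induction L with
  | nil =>
    refine ⟨hp, hpp, hpp, fun k _ => (inv k).symm⟩
  | cons k L ih =>
    obtain ⟨hkL, hL⟩ := List.nodup_cons.1 hL
    obtain ⟨hB, hBB, hpB, hMB⟩ := ih hL
    have hdef : applyDelta M (k :: L) p =
      applyDelta M L p - M k * applyDelta M L p * star (M k) := rfl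
    rw [hdef]
    generalize applyDelta M L p = B at hB hBB hpB hMB ⊢
    clear hdef
    -- `F` is the wandering projection of `M k` on `ran p`; the new product is `B * F`.
    set F := p - M k * p * star (M k) with hF
    have inv' : ∀ l, p * star (M l) * p = p * star (M l) := fun l => by
      simpa [hp, mul_assoc] using congrArg star (inv l)
    have hBp : B * p = B := by simpa [hp, hB] using congrArg star hpB
    have hFs : star F = F := by simp [hF, hp, mul_assoc]
    have e1 : B - M k * B * star (M k) = B * F := by
      rw [hMB k hkL, hF, mul_sub, hBp]; simp only [mul_assoc]
    have hBs : star (B - M k * B * star (M k)) = B - M k * B * star (M k) := by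
      simp [hB, mul_assoc]
    have hpF : p * F = F := by
      rw [hF, mul_sub, hpp, ← mul_assoc, ← mul_assoc, inv]
    have hFp : F * p = F := by simpa [hp, hFs] using congrArg star hpF
    have hFF : F * F = F := by
      have a : F * (M k * p * star (M k)) = 0 := by
        have : M k * p * star (M k) * (M k * p * star (M k)) = M k * p * star (M k) := by
          calc _ = M k * p * (star (M k) * M k) * p * star (M k) := by noncomm_ring
            _ = M k * (p * p) * star (M k) := by rw [iso]; noncomm_ring
            _ = _ := by rw [hpp]
        rw [hF, sub_mul, this, ← mul_assoc, ← mul_assoc, inv, sub_self]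
      calc F * F = F * p - F * (M k * p * star (M k)) := by rw [← mul_sub]
        _ = F := by rw [a, hFp, sub_zero]
    -- `B * F` is self-adjoint, being equal to `B - M k B (M k)*`, so `B` and `F` commute.
    have hc : F * B = B * F := by
      rw [e1] at hBs
      simpa [hFs, hB] using hBs
    have hMF : ∀ l, l ≠ k → M l * F = F * M l * p := fun l hl => by
      -- Double commutation on `ran p`, with `p (M k)* p = p (M k)*` from invariance.
      have o : p * M l * star (M k) * p = M l * p * star (M k) := by
        have := orth l k hl
        have h2 : p * M l * star (M k) * p = p * M l * p * (star (M k) * p) := by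
          rw [← sub_eq_zero, ← this]; noncomm_ring
        rw [h2, inv, mul_assoc, ← mul_assoc p, inv', mul_assoc]
      calc M l * F = M l * p - M l * M k * p * star (M k) := by rw [hF]; noncomm_ring
        _ = M l * p - M k * (M l * p * star (M k)) := by rw [comm l k]; noncomm_ring
        _ = M l * p - M k * p * (M l * star (M k)) * p := by rw [← o]; noncomm_ring
        _ = p * M l * p - M k * p * (star (M k) * M l) * p := by rw [dc k l hl.symm, inv]
        _ = _ := by rw [hF]; noncomm_ring
    refine ⟨hBs, ?_, ?_, ?_⟩
    · rw [e1]
      calc B * F * (B * F) = B * (F * B) * F := by noncomm_ring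
        _ = B * B * (F * F) := by rw [hc]; noncomm_ring
        _ = _ := by rw [hBB, hFF]
    · rw [e1, ← mul_assoc, hpB]
    · intro l hl
      simp only [List.mem_cons, not_or] at hl
      rw [e1, ← mul_assoc, hMB l hl.2]
      calc B * M l * p * F = B * (M l * (p * F)) := by noncomm_ring
        _ = _ := by rw [hpF, hMF l hl.1]; noncomm_ring

end Wandering

/-! ### Transfer through an isometric dilation -/

section Transfer

variable {K : Type*} [NormedAddCommGroup K] [InnerProductSpace ℂ K] [CompleteSpace K]

theorem comp_eq_zero_of_adjoint_comp_comp {E F G : Type*}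
    [NormedAddCommGroup E] [InnerProductSpace ℂ E] [CompleteSpace E]
    [NormedAddCommGroup F] [InnerProductSpace ℂ F] [CompleteSpace F]
    [NormedAddCommGroup G] [InnerProductSpace ℂ G]
    (Y : E →L[ℂ] F) (Z : G →L[ℂ] E) (h : adjoint Y ∘L (Y ∘L Z) = 0) : Y ∘L Z = 0 := by
  ext x
  have h1 : adjoint Y (Y (Z x)) = 0 := by simpa using DFunLike.congr_fun h x
  have h2 : inner ℂ (Y (Z x)) (Y (Z x)) = 0 := by
    rw [← adjoint_inner_left, h1, inner_zero_left]
  simpa using h2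

/-- `Y* Y Z* Z = 0` forces `Y Z* = 0`: cancel `Y*` on the left, then `Z` on the right. -/
theorem comp_adjoint_eq_zero {E F G : Type*}
    [NormedAddCommGroup E] [InnerProductSpace ℂ E] [CompleteSpace E]
    [NormedAddCommGroup F] [InnerProductSpace ℂ F] [CompleteSpace F]
    [NormedAddCommGroup G] [InnerProductSpace ℂ G] [CompleteSpace G]
    (Y : E →L[ℂ] F) (Z : E →L[ℂ] G)
    (h : (adjoint Y ∘L Y) ∘L (adjoint Z ∘L Z) = 0) : Y ∘L adjoint Z = 0 := by
  have h1 : Y ∘L (adjoint Z ∘L Z) = 0 := comp_eq_zero_of_adjoint_comp_comp _ _ h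
  have h2 : adjoint Z ∘L (Z ∘L adjoint Y) = 0 := by
    simpa [adjoint_comp, comp_assoc] using congrArg adjoint h1
  have h3 := comp_eq_zero_of_adjoint_comp_comp _ _ h2
  simpa [adjoint_comp] using congrArg adjoint h3

/-- Positivity of `∏_{k ∈ L} (I - Δ_{T k})(I - T j* T j)`, given a co-isometric extension
`V (T k)* = (M k)* V` of `T` to doubly commuting isometries. With `p = I - V V*`, this operator
is the compression by `M j V` of `∏_{k ∈ L ∪ {j}} (I - Δ_{M k})(p)`, and the Beurling condition
says exactly that the `M k` doubly commute on `ran p`. -/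
theorem positive_of_dilation {n : ℕ} (T : Fin n → H →L[ℂ] H) (M : Fin n → K →L[ℂ] K)
    (V : H →L[ℂ] K) (hV : adjoint V ∘L V = 1)
    (hVT : ∀ k, V ∘L adjoint (T k) = adjoint (M k) ∘L V)
    (iso : ∀ k, star (M k) * M k = 1)
    (comm : ∀ k l, M k * M l = M l * M k)
    (dc : ∀ k l, k ≠ l → star (M k) * M l = M l * star (M k))
    (hB : ∀ i j, i ≠ j → (1 - adjoint (T i) * T i) * (1 - adjoint (T j) * T j) = 0)
    (j : Fin n) (L : List (Fin n)) (hL : L.Nodup) (hj : j ∉ L) :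
    (applyDelta T L (1 - adjoint (T j) * T j)).IsPositive := by
  have hTV : ∀ k, T k ∘L adjoint V = adjoint V ∘L M k := fun k => by
    simpa [adjoint_comp] using congrArg adjoint (hVT k)
  set q : K →L[ℂ] K := V ∘L adjoint V with hq
  set p : K →L[ℂ] K := 1 - q with hpdef
  have hqs : star q = q := by simp [hq, star_eq_adjoint, adjoint_comp]
  have hqq : q * q = q := by
    change V ∘L adjoint V ∘L V ∘L adjoint V = _
    rw [← comp_assoc (adjoint V), hV]; rfl
  have hqM : ∀ k, q * M k * q = q * M k := fun k => by
    change V ∘L (adjoint V ∘L M k) ∘L V ∘L adjoint V = V ∘L (adjoint V ∘L M k)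
    rw [← hTV, comp_assoc, ← comp_assoc (adjoint V), hV]; rfl
  have hVp : adjoint V ∘L p = 0 := by
    rw [hpdef, comp_sub, hq, ← comp_assoc, hV]; ext; simp
  have hp : star p = p := by simp [hpdef, hqs]
  have hpp : p * p = p := by
    rw [hpdef]; simp [sub_mul, mul_sub, hqq]
  have inv : ∀ k, p * M k * p = M k * p := fun k => by
    have := hqM k
    calc p * M k * p = M k * p - (q * M k - q * M k * q) := by rw [hpdef]; noncomm_ring
      _ = _ := by rw [this, sub_self, sub_zero]
  have hD : ∀ k, 1 - adjoint (T k) * T k =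
      adjoint (p ∘L M k ∘L V) ∘L (p ∘L M k ∘L V) := fun k => by
    have hTk : T k = adjoint V ∘L M k ∘L V := by
      rw [← comp_assoc, ← hTV, comp_assoc, hV]; rfl
    have hps : adjoint p = p := hp
    have e : adjoint (p ∘L M k ∘L V) ∘L (p ∘L M k ∘L V) =
        adjoint V ∘L (star (M k) * (p * p) * M k) ∘L V := by
      rw [adjoint_comp, adjoint_comp, hps]; rfl
    have e2 : star (M k) * p * M k = 1 - star (M k) * q * M k := by
      rw [hpdef, mul_sub, mul_one, sub_mul, iso]
    rw [e, hpp, e2, sub_comp, comp_sub]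
    congr 1
    · exact hV.symm
    · rw [hTk, adjoint_comp, adjoint_comp, adjoint_adjoint]; rfl
  have orth : ∀ k l, k ≠ l → p * M k * (1 - p) * star (M l) * p = 0 := fun k l hkl => by
    have h := hB k l hkl
    rw [hD, hD] at h
    have h2 := comp_adjoint_eq_zero _ _ h
    have hps : adjoint p = p := hp
    rw [adjoint_comp, adjoint_comp, hps] at h2
    rw [hpdef, sub_sub_cancel, ← hpdef]
    exact h2
  have key : ∀ L : List (Fin n), j ∉ L → applyDelta T L (1 - adjoint (T j) * T j) =
      adjoint V ∘L (star (M j) * applyDelta M (L ++ [j]) p * M j) ∘L V := by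
    intro L
    induction L with
    | nil =>
      intro _
      change _ = adjoint V ∘L (star (M j) * (p - M j * p * star (M j)) * M j) ∘L V
      have e : star (M j) * (p - M j * p * star (M j)) * M j = star (M j) * p * p * M j - p := by
        calc _ = star (M j) * p * M j - (star (M j) * M j) * p * (star (M j) * M j) := by
              noncomm_ring
          _ = _ := by rw [iso, mul_assoc _ p p, hpp]; simp
      have hps : adjoint p = p := hp
      rw [e, sub_comp, comp_sub, ← comp_assoc (adjoint V) p, hVp, zero_comp, sub_zero]
      change 1 - adjoint (T j) * T j = _
      rw [hD, adjoint_comp, adjoint_comp, hps]; rfl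
    | cons k L ih =>
      intro hjL
      simp only [List.mem_cons, not_or] at hjL
      change applyDelta T L (1 - adjoint (T j) * T j) -
        T k * applyDelta T L (1 - adjoint (T j) * T j) * adjoint (T k) =
        adjoint V ∘L (star (M j) * (applyDelta M (L ++ [j]) p -
          M k * applyDelta M (L ++ [j]) p * star (M k)) * M j) ∘L V
      rw [ih hjL.2]
      generalize applyDelta M (L ++ [j]) p = B
      rw [mul_sub, sub_mul, sub_comp, comp_sub]
      congr 1
      have dc' : M k * star (M j) = star (M j) * M k := (dc j k hjL.1).symm
      have dc2 : star (M k) * M j = M j * star (M k) := dc k j (Ne.symm hjL.1)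
      calc _ = (T k ∘L adjoint V) ∘L (star (M j) * B * M j) ∘L (V ∘L adjoint (T k)) := rfl
        _ = adjoint V ∘L ((M k * star (M j)) * B * (M j * star (M k))) ∘L V := by
          rw [hTV, hVT]; rfl
        _ = _ := by rw [dc', ← dc2]; rfl
  rw [key L hj]
  have hnd : (L ++ [j]).Nodup := by
    rw [List.nodup_append]; simp only [List.nodup_singleton, hL, true_and]
    intro a ha b hb hab
    simp only [List.mem_singleton] at hb
    exact hj (hb ▸ hab ▸ ha)
  obtain ⟨h1, h2, -, -⟩ := applyDelta_projection M p hp hpp iso comm dc inv orth _ hnd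
  generalize applyDelta M (L ++ [j]) p = B at h1 h2
  have : adjoint V ∘L (star (M j) * B * M j) ∘L V =
      adjoint (B ∘L M j ∘L V) ∘L (B ∘L M j ∘L V) := by
    have h1' : adjoint B = B := h1
    rw [adjoint_comp, adjoint_comp, h1']
    nth_rewrite 1 [← h2]
    rfl
  rw [this]
  exact isPositive_adjoint_comp_self _

end Transfer

/-! ### Shifts on `ℓ²(ℕⁿ, H)` -/

section Shift

variable {n : ℕ}

/-- The Hilbert space `ℓ²(ℕⁿ, H)`, i.e. the vector-valued Hardy space of the polydisc in terms of
Taylor coefficients. -/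
abbrev HardySpace (n : ℕ) (H : Type*) [NormedAddCommGroup H] [InnerProductSpace ℂ H] :=
  lp (fun _ : Fin n → ℕ => H) 2

/-- The translation `α ↦ α + eᵢ` of multi-indices. -/
def bump (i : Fin n) (α : Fin n → ℕ) : Fin n → ℕ := α + Pi.single i 1

theorem bump_injective (i : Fin n) : Function.Injective (bump i) := add_left_injective _

theorem bump_comm (i j : Fin n) (α : Fin n → ℕ) : bump i (bump j α) = bump j (bump i α) :=
  add_right_comm _ _ _

theorem bump_self (i : Fin n) (α : Fin n → ℕ) : bump i α i = α i + 1 := by simp [bump]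

theorem bump_ne {i j : Fin n} (h : j ≠ i) (α : Fin n → ℕ) : bump i α j = α j := by
  simp [bump, h]

theorem exists_bump {i : Fin n} {α : Fin n → ℕ} (h : α i ≠ 0) : ∃ β, α = bump i β := by
  refine ⟨α - Pi.single i 1, (tsub_add_cancel_of_le ?_).symm⟩
  intro k
  by_cases hk : k = i
  · subst hk; simpa [Nat.one_le_iff_ne_zero] using h
  · simp [hk]

theorem summable_sq (f : HardySpace n H) : Summable fun α => ‖f α‖ ^ 2 := by
  simpa using (lp.memℓp f).summable (by norm_num)

theorem norm_sq_eq (f : HardySpace n H) : ‖f‖ ^ 2 = ∑' α, ‖f α‖ ^ 2 := by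
  simpa using lp.norm_rpow_eq_tsum (p := 2) (by norm_num) f

theorem memlp_of_summable {f : (Fin n → ℕ) → H} (h : Summable fun α => ‖f α‖ ^ 2) :
    Memℓp f 2 := memℓp_gen (by simpa using h)

/-- The backward shift `(Nᵢ f)(α) = f (α + eᵢ)`. -/
noncomputable def backShift (i : Fin n) : HardySpace n H →L[ℂ] HardySpace n H :=
  LinearMap.mkContinuous
    { toFun := fun f => ⟨fun α => f (bump i α),
        memlp_of_summable ((summable_sq f).comp_injective (bump_injective i))⟩
      map_add' := fun f g => by ext; rfl
      map_smul' := fun c f => by ext; rfl } 1 (fun f => by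
    rw [one_mul]
    refine le_of_sq_le_sq ?_ (norm_nonneg _)
    rw [norm_sq_eq, norm_sq_eq]
    exact tsum_comp_le_tsum_of_inj (summable_sq f) (fun _ => by positivity) (bump_injective i))

theorem backShift_apply (i : Fin n) (f : HardySpace n H) (α : Fin n → ℕ) :
    backShift i f α = f (bump i α) := rfl

/-- The shift `Mᵢ` (multiplication by the `i`-th coordinate), as adjoint of the backward shift. -/
noncomputable def fwdShift (i : Fin n) : HardySpace n H →L[ℂ] HardySpace n H :=
  adjoint (backShift i)

theorem fwdShift_inner (i : Fin n) (f : HardySpace n H) (α : Fin n → ℕ) (x : H) :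
    inner ℂ x (fwdShift i f α) = inner ℂ (backShift i (lp.single 2 α x)) f := by
  rw [← adjoint_inner_right, lp.inner_single_left]; rfl

theorem fwdShift_bump (i : Fin n) (f : HardySpace n H) (α : Fin n → ℕ) :
    fwdShift i f (bump i α) = f α := by
  refine ext_inner_left ℂ fun x => ?_
  have : backShift i (lp.single 2 (bump i α) x) = (lp.single 2 α x : HardySpace n H) := by
    ext β
    rw [backShift_apply]
    by_cases h : β = α
    · subst h; rw [lp.single_apply_self, lp.single_apply_self]
    · rw [lp.single_apply_ne _ _ _ h, lp.single_apply_ne _ _ _ fun h' => h (bump_injective i h')]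
  rw [fwdShift_inner, this, lp.inner_single_left]

theorem fwdShift_zero (i : Fin n) (f : HardySpace n H) (α : Fin n → ℕ) (h : α i = 0) :
    fwdShift i f α = 0 := by
  refine ext_inner_left ℂ fun x => ?_
  have : backShift i (lp.single 2 α x) = (0 : HardySpace n H) := by
    ext β
    rw [backShift_apply, lp.single_apply_ne]
    · rfl
    · intro h'
      rw [← h', bump_self] at h
      omega
  rw [fwdShift_inner, this, inner_zero_left, inner_zero_right]

theorem star_fwdShift (i : Fin n) : star (fwdShift i : HardySpace n H →L[ℂ] _) = backShift i :=
  adjoint_adjoint _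

theorem fwdShift_iso (i : Fin n) :
    star (fwdShift i : HardySpace n H →L[ℂ] HardySpace n H) * fwdShift i = 1 := by
  rw [star_fwdShift]
  ext f α
  exact fwdShift_bump i f α

theorem fwdShift_comm (i j : Fin n) :
    (fwdShift i : HardySpace n H →L[ℂ] HardySpace n H) * fwdShift j = fwdShift j * fwdShift i := by
  have : (backShift j : HardySpace n H →L[ℂ] HardySpace n H) * backShift i
      = backShift i * backShift j := by
    ext f α
    exact congrArg f (bump_comm i j α)
  have h := congrArg star this
  rw [star_mul, star_mul] at h
  exact h

theorem fwdShift_doubly (i j : Fin n) (hij : i ≠ j) :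
    star (fwdShift i : HardySpace n H →L[ℂ] HardySpace n H) * fwdShift j =
      fwdShift j * star (fwdShift (H := H) i) := by
  rw [star_fwdShift]
  ext f α
  change fwdShift j f (bump i α) = fwdShift j (backShift i f) α
  by_cases h : α j = 0
  · rw [fwdShift_zero _ _ _ h, fwdShift_zero]
    rwa [bump_ne hij.symm]
  · obtain ⟨β, rfl⟩ := exists_bump h
    rw [bump_comm, fwdShift_bump, fwdShift_bump, backShift_apply]

end Shift

/-! ### The Szegő kernel identity `∑_α T^α 𝕊⁻¹ T^{*α} = I` -/

section Szego

open scoped IsMulCommutative in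
/-- A commuting family in a ring lifts to a commutative ring. -/
theorem exists_comm_lift.{u} {A : Type u} [Ring A] {n : ℕ} (a : Fin n → A)
    (h : ∀ i j, a i * a j = a j * a i) :
    ∃ (S : Type u) (_ : CommRing S) (f : S →+* A) (s : Fin n → S), ∀ i, f (s i) = a i := by
  have hc : ∀ x ∈ Set.range a, ∀ y ∈ Set.range a, x * y = y * x := by
    rintro _ ⟨i, rfl⟩ _ ⟨j, rfl⟩
    exact h i j
  have := Subring.isMulCommutative_closure hc
  exact ⟨Subring.closure (Set.range a), inferInstance, (Subring.closure (Set.range a)).subtype,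
    fun i => ⟨a i, Subring.subset_closure ⟨i, rfl⟩⟩, fun _ => rfl⟩

theorem finPow_bump {n : ℕ} (T : Fin n → H →L[ℂ] H) (h : ∀ i j, T i * T j = T j * T i)
    (i : Fin n) (α : Fin n → ℕ) : finPow T (bump i α) = T i * finPow T α := by
  obtain ⟨S, _, f, s, hs⟩ := exists_comm_lift T h
  have key : ∀ β : Fin n → ℕ, finPow T β = f (∏ i, s i ^ β i) := fun β => by
    rw [Fin.prod_univ_def, map_list_prod, List.map_map]
    simp [finPow, Function.comp_def, hs]
  rw [key, key, ← hs, ← map_mul]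
  congr 1
  simp only [bump, Pi.add_apply, pow_add, Finset.prod_mul_distrib]
  rw [mul_comm]
  congr 1
  rw [Finset.prod_eq_single i]
  · simp
  · intro b _ hb; simp [hb]
  · simp

/-- The map `X ↦ Δ_X`, as a monoid homomorphism. -/
noncomputable def conjHom : (H →L[ℂ] H) →* Module.End ℂ (H →L[ℂ] H) where
  toFun X :=
    { toFun := fun A => X * A * star X
      map_add' := fun A B => by noncomm_ring
      map_smul' := fun c A => by simp }
  map_one' := by ext; simp
  map_mul' X Y := by
    refine LinearMap.ext fun A => ?_
    change X * Y * A * star (X * Y) = X * (Y * A * star Y) * star X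
    rw [star_mul]; noncomm_ring

theorem conjHom_apply (X A : H →L[ℂ] H) : conjHom X A = X * A * star X := rfl

theorem applyDelta_eq {n : ℕ} (T : Fin n → H →L[ℂ] H) (L : List (Fin n)) (A : H →L[ℂ] H) :
    applyDelta T L A = (L.map fun k => 1 - conjHom (T k)).prod A := by
  induction L with
  | nil => rfl
  | cons k L ih =>
    rw [List.map_cons, List.prod_cons, Module.End.mul_apply, ← ih]
    rfl

/-- Telescoping in each variable:
`∑_{α ∈ {0,…,N-1}ⁿ} T^α 𝕊⁻¹ T^{*α} = ∏ᵢ (I - Δ_{Tᵢ^N})(I)`. -/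
theorem box_sum {n : ℕ} (T : Fin n → H →L[ℂ] H) (h : ∀ i j, T i * T j = T j * T i) (N : ℕ) :
    ∑ α ∈ Fintype.piFinset (fun _ : Fin n => Finset.range N),
      finPow T α * szegoInv T * star (finPow T α) =
    applyDelta (fun i => T i ^ N) (List.finRange n) 1 := by
  obtain ⟨S, _, f, d, hd⟩ := exists_comm_lift (fun i => conjHom (T i)) (fun i j => by
    rw [← map_mul, h, map_mul])
  have key : ∀ β : Fin n → ℕ, conjHom (finPow T β) = f (∏ i, d i ^ β i) := fun β => by
    rw [Fin.prod_univ_def, finPow, map_list_prod, map_list_prod, List.map_map, List.map_map]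
    simp [Function.comp_def, hd]
  have hS : szegoInv T = f (∏ i, (1 - d i)) 1 := by
    have e : ∏ i, (1 - d i) = ∑ k : Fin n → Bool,
        (-1) ^ (∑ i, if k i then 1 else 0) * ∏ i, d i ^ (if k i then 1 else 0) := by
      have : ∀ i, 1 - d i = ∑ b : Bool, (-1) ^ (if b then 1 else 0) * d i ^ (if b then 1 else 0) :=
        fun i => by simp; ring
      simp_rw [this]
      rw [Fintype.prod_sum]
      refine Finset.sum_congr rfl fun k _ => ?_
      rw [Finset.prod_mul_distrib, Finset.prod_pow_eq_pow_sum]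
    rw [e, map_sum, LinearMap.sum_apply, szegoInv]
    refine Finset.sum_congr rfl fun k _ => ?_
    have hk := key fun i => if k i then 1 else 0
    generalize (∑ i, if k i then 1 else 0) = m
    rcases Nat.even_or_odd m with hm | hm
    · simp only [hm.neg_one_pow, one_mul, one_smul, ← hk]
      simp [conjHom_apply, star_eq_adjoint]
    · simp only [hm.neg_one_pow, neg_mul, one_mul, neg_smul, one_smul, map_neg, ← hk]
      simp [conjHom_apply, star_eq_adjoint]
  have hL : ∀ α : Fin n → ℕ, finPow T α * szegoInv T * star (finPow T α) =
      f ((∏ i, d i ^ α i) * ∏ i, (1 - d i)) 1 := fun α => by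
    rw [map_mul, Module.End.mul_apply, ← hS, ← key, conjHom_apply]
  simp_rw [hL]
  rw [← LinearMap.sum_apply, ← map_sum, ← Finset.sum_mul,
    ← Finset.prod_univ_sum (fun _ => Finset.range N) (fun i k => d i ^ k),
    ← Finset.prod_mul_distrib, applyDelta_eq, Fin.prod_univ_def, map_list_prod, List.map_map]
  congr 3
  ext1 i
  simp only [Function.comp_apply]
  rw [mul_comm, mul_neg_geom_sum, map_sub, map_pow, map_pow, hd, map_one]

theorem applyDelta_pow_tendsto {n : ℕ} (T : Fin n → H →L[ℂ] H) (hc : ∀ i, ‖T i‖ ≤ 1)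
    (hpure : ∀ i (h : H), Tendsto (fun m : ℕ => (adjoint (T i) ^ m) h) atTop (𝓝 0))
    (L : List (Fin n)) :
    (∃ C, ∀ N, ‖applyDelta (fun i => T i ^ N) L 1‖ ≤ C) ∧
    ∀ h, Tendsto (fun N => applyDelta (fun i => T i ^ N) L 1 h) atTop (𝓝 h) := by
  induction L with
  | nil => exact ⟨⟨‖(1 : H →L[ℂ] H)‖, fun N => le_rfl⟩, fun h => tendsto_const_nhds⟩
  | cons k L ih =>
    obtain ⟨⟨C, hC⟩, hlim⟩ := ih
    have hk : ∀ N, ‖T k ^ N‖ ≤ 1 := fun N => by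
      induction N with
      | zero => rw [pow_zero]; exact norm_id_le
      | succ N ih =>
        rw [pow_succ]
        exact (norm_mul_le _ _).trans (mul_le_one₀ ih (norm_nonneg _) (hc k))
    have hdef : ∀ N, applyDelta (fun i => T i ^ N) (k :: L) 1 =
      applyDelta (fun i => T i ^ N) L 1 -
        T k ^ N * applyDelta (fun i => T i ^ N) L 1 * star (T k ^ N) := fun N => rfl
    have hb : ∀ N, ‖T k ^ N * applyDelta (fun i => T i ^ N) L 1‖ ≤ C := fun N => by
      refine (norm_mul_le _ _).trans ?_
      exact (mul_le_of_le_one_left (norm_nonneg _) (hk N)).trans (hC N)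
    refine ⟨⟨C + C, fun N => ?_⟩, fun h => ?_⟩
    · rw [hdef]
      refine (norm_sub_le _ _).trans (add_le_add (hC N) ?_)
      refine (norm_mul_le _ _).trans ?_
      rw [norm_star]
      exact (mul_le_of_le_one_right (norm_nonneg _) (hk N)).trans (hb N)
    · have h0 : Tendsto (fun N => (T k ^ N * applyDelta (fun i => T i ^ N) L 1 : H →L[ℂ] H)
          ((adjoint (T k) ^ N) h)) atTop (𝓝 0) := by
        refine squeeze_zero_norm (fun N => (le_opNorm _ _).trans
          (mul_le_mul_of_nonneg_right (hb N) (norm_nonneg _))) ?_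
        simpa using (hpure k h).norm.const_mul C
      have := (hlim h).sub h0
      rw [sub_zero] at this
      refine this.congr fun N => ?_
      rw [hdef, star_pow]
      rfl

/-- The canonical map `h ↦ (D T^{*α} h)_α` is isometric when `D* D = 𝕊⁻¹`. -/
theorem hasSum_szego {n : ℕ} (T : Fin n → H →L[ℂ] H) (hT : IsSzegoTuple T)
    (D : H →L[ℂ] H) (hD : szegoInv T = star D * D) (h : H) :
    HasSum (fun α : Fin n → ℕ => ‖D (star (finPow T α) h)‖ ^ 2) (‖h‖ ^ 2) := by
  set F : (Fin n → ℕ) → ℝ := fun α => ‖D (star (finPow T α) h)‖ ^ 2 with hF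
  set box : ℕ → Finset (Fin n → ℕ) := fun N => Fintype.piFinset fun _ => Finset.range N with hbox
  have hsum : ∀ N, ∑ α ∈ box N, F α =
      RCLike.re (inner ℂ h (applyDelta (fun i => T i ^ N) (List.finRange n) 1 h)) := fun N => by
    rw [← box_sum T hT.comm, _root_.sum_apply, inner_sum, map_sum]
    refine Finset.sum_congr rfl fun α _ => ?_
    have : finPow T α * szegoInv T * star (finPow T α) =
        adjoint (D * star (finPow T α)) * (D * star (finPow T α)) := by
      rw [hD, ← star_eq_adjoint, star_mul, star_star]; noncomm_ring
    rw [this]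
    change F α = RCLike.re (inner ℂ h (adjoint (D * star (finPow T α))
      ((D * star (finPow T α)) h)))
    rw [adjoint_inner_right, inner_self_eq_norm_sq]
    rfl
  have hlim : Tendsto (fun N => ∑ α ∈ box N, F α) atTop (𝓝 (‖h‖ ^ 2)) := by
    simp_rw [hsum]
    have h1 := (applyDelta_pow_tendsto T hT.contraction hT.pure (List.finRange n)).2 h
    have h2 := ((tendsto_const_nhds (x := h)).inner (𝕜 := ℂ) h1)
    have h3 := (RCLike.continuous_re (K := ℂ)).continuousAt.tendsto.comp h2
    rw [inner_self_eq_norm_sq] at h3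
    exact h3
  have hmono : Monotone box := fun a b hab =>
    Fintype.piFinset_subset _ _ fun _ => Finset.range_mono hab
  have hex : ∀ α, ∃ N, α ∈ box N := fun α => by
    refine ⟨(∑ i, α i) + 1, ?_⟩
    rw [hbox, Fintype.mem_piFinset]
    intro i
    rw [Finset.mem_range, Nat.lt_succ_iff]
    exact Finset.single_le_sum (fun _ _ => Nat.zero_le _) (Finset.mem_univ i)
  have hnn : ∀ α, 0 ≤ F α := fun α => by positivity
  have hboxtop : Tendsto box atTop atTop := tendsto_atTop_finset_of_monotone hmono hex
  have hsm : Summable F := by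
    refine summable_of_sum_le (c := ‖h‖ ^ 2) hnn fun u => ?_
    obtain ⟨N, hN⟩ := (hboxtop.eventually (eventually_ge_atTop u)).exists
    refine (Finset.sum_le_sum_of_subset_of_nonneg hN fun _ _ _ => hnn _).trans ?_
    refine Monotone.ge_of_tendsto (fun a b hab => ?_) hlim N
    exact Finset.sum_le_sum_of_subset_of_nonneg (hmono hab) fun _ _ _ => hnn _
  have := hsm.hasSum.comp hboxtop
  rw [tendsto_nhds_unique hlim this]
  exact hsm.hasSum

/-- The canonical map `h ↦ (D T^{*α} h)_α` into the Hardy space. -/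
noncomputable def canonicalMap {n : ℕ} (T : Fin n → H →L[ℂ] H) (hT : IsSzegoTuple T)
    (D : H →L[ℂ] H) (hD : szegoInv T = star D * D) : H →ₗᵢ[ℂ] HardySpace n H where
  toFun h := ⟨fun α => D (star (finPow T α) h), memlp_of_summable (hasSum_szego T hT D hD h).summable⟩
  map_add' x y := by ext α; simp; rfl
  map_smul' c x := by ext α; simp
  norm_map' x := by
    rw [← sq_eq_sq₀ (norm_nonneg _) (norm_nonneg _), norm_sq_eq]
    exact (hasSum_szego T hT D hD x).tsum_eq

/-- Existence of the coextension: `T` is, up to an isometry `V`, the compression of the shifts on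
the Hardy space to a jointly coinvariant subspace. -/
theorem exists_coextension {n : ℕ} (T : Fin n → H →L[ℂ] H) (hT : IsSzegoTuple T) :
    ∃ V : H →L[ℂ] HardySpace n H, adjoint V ∘L V = 1 ∧
      ∀ k, V ∘L adjoint (T k) = adjoint (fwdShift k) ∘L V := by
  obtain ⟨D, hD⟩ := CStarAlgebra.nonneg_iff_eq_star_mul_self.1
    ((nonneg_iff_isPositive _).2 hT.pos)
  refine ⟨(canonicalMap T hT D hD).toContinuousLinearMap,
    (norm_map_iff_adjoint_comp_self _).1 (canonicalMap T hT D hD).norm_map, fun k => ?_⟩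
  have e : adjoint (fwdShift k : HardySpace n H →L[ℂ] _) = backShift k := star_fwdShift k
  rw [e]
  ext h α
  change D (star (finPow T α) (star (T k) h)) = D (star (finPow T (bump k α)) h)
  rw [finPow_bump T hT.comm, star_mul]
  rfl

end Szego

/-- For a Beurling tuple `T`, `j`, `P ⊆ {1,…,n} \ {j}` and
`i ∉ P ∪ {j}`, one has `Tᵢ D²_{j,T,P} Tᵢ* ≤ D²_{j,T,P}`. -/
theorem beurling_truncDefectSq_dominates {n : ℕ} (hn : 0 < n) (T : Fin n → H →L[ℂ] H)
    (hT : IsBeurlingTuple T) (j : Fin n) (P : Finset (Fin n)) (hP : j ∉ P)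
    (i : Fin n) (hiP : i ∉ P) (hij : i ≠ j) :
    (truncDefectSq T j P - T i * truncDefectSq T j P * adjoint (T i)).IsPositive := by
  obtain ⟨hS, hB⟩ := hT
  obtain ⟨V, hV, hVT⟩ := exists_coextension T hS
  -- The operator in question is `∏_{k ∈ {i} ∪ P} (I - Δ_{T k})(I - T j* T j)`.
  change (applyDelta T (i :: P.sort (· ≤ ·)) (1 - adjoint (T j) * T j)).IsPositive
  have hnd : (i :: P.sort (· ≤ ·)).Nodup :=
    List.nodup_cons.2 ⟨by simpa using hiP, P.sort_nodup (· ≤ ·)⟩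
  have hj : j ∉ i :: P.sort (· ≤ ·) := by
    simpa [hP] using hij.symm
  have hpos := positive_of_dilation T (fwdShift (n := n) (H := H)) V hV hVT fwdShift_iso
    fwdShift_comm fwdShift_doubly
  exact hpos hB j _ hnd hj
end
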